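/- Let k ≥ 2. For any K_k-minor-free finite simple graph G of maximum degree Δ, the strong clique number of G satisfies ω₂'(G) ≤ (k−1)(Δ+1). -/

import Mathlib

/-!
Pairwise disjoint edges of a strong clique are branch sets of a clique minor, so in a
`K_k`-minor-free graph the edges of a strong clique contain no matching of size `k`. It remains to
see that a graph with maximum degree at most `Δ` and matching number at most `n` has at most
`n * (Δ + 1)` edges (`card_le_of_matching_le`), which is proved by induction on `n`.

If some vertex `s` is covered by every matching of size `n + 1`, deleting the at most `Δ` edges at
`s` lowers the matching number. Otherwise every vertex is missed by some maximum matching. Fix a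
maximum matching `M`. The distance-two case of Gallai's lemma (`gallai_step`) says that no vertex
`s` has two neighbours not covered by `M`. Every edge meets the set of the `2 (n + 1)` vertices
covered by `M`, and each of those vertices is on at most one edge leaving this set; double counting
gives `2 |E| ≤ 2 (n + 1) Δ + 2 (n + 1)`.
-/

/-- `G` contains a clique minor of order `k`: there are `k` pairwise disjoint nonempty
connected branch sets with an edge of `G` between every two of them. -/
def HasCliqueMinor {α : Type} (G : SimpleGraph α) (k : ℕ) : Prop :=
  ∃ S : Fin k → Set α,
    (∀ i, (G.induce (S i)).Connected) ∧
    (∀ i j, i ≠ j → Disjoint (S i) (S j)) ∧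
    (∀ i j, i ≠ j → ∃ u ∈ S i, ∃ v ∈ S j, G.Adj u v)

/-- A strong clique of `G`: a set of edges of `G` every two of which are incident or
joined by an edge of `G`. -/
def IsStrongCliqueSet {α : Type} (G : SimpleGraph α) (S : Set (Sym2 α)) : Prop :=
  S ⊆ G.edgeSet ∧
    ∀ e ∈ S, ∀ f ∈ S, e ≠ f →
      (∃ x, x ∈ e ∧ x ∈ f) ∨ ∃ x y, x ∈ e ∧ y ∈ f ∧ G.Adj x y

/-- A set of edges no two of which share a vertex. -/
def IsMatchingSet {V : Type} (M : Finset (Sym2 V)) : Prop :=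
  ∀ e ∈ M, ∀ f ∈ M, ∀ x, x ∈ e → x ∈ f → e = f

open Classical in
/-- The vertices covered by a set of edges. -/
noncomputable def coveredVerts {V : Type} (M : Finset (Sym2 V)) : Finset V :=
  M.biUnion fun e => e.toFinset

lemma mem_coveredVerts {V : Type} {M : Finset (Sym2 V)} {x : V} :
    x ∈ coveredVerts M ↔ ∃ e ∈ M, x ∈ e := by
  simp [coveredVerts]

lemma card_coveredVerts {V : Type} {M : Finset (Sym2 V)} (hM : IsMatchingSet M)
    (hd : ∀ e ∈ M, ¬ e.IsDiag) : (coveredVerts M).card = 2 * M.card := by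
  classical
  rw [coveredVerts, Finset.card_biUnion, Finset.sum_const_nat (m := 2), mul_comm]
  · intro e he
    convert Sym2.card_toFinset_of_not_isDiag e (hd e he)
  · intro e he f hf hef
    rw [Function.onFun, Finset.disjoint_left]
    intro x hx hx'
    exact hef (hM e he f hf x (by simpa using hx) (by simpa using hx'))

open Classical in
lemma IsMatchingSet.insert {V : Type} {M : Finset (Sym2 V)} (hM : IsMatchingSet M) {a b : V}
    (ha : a ∉ coveredVerts M) (hb : b ∉ coveredVerts M) :
    IsMatchingSet (insert s(a, b) M) ∧ (insert s(a, b) M).card = M.card + 1 := by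
  rw [mem_coveredVerts] at ha hb
  push Not at ha hb
  refine ⟨?_, Finset.card_insert_of_notMem fun h => ha _ h (Sym2.mem_mk_left a b)⟩
  intro e he f hf x hxe hxf
  rw [Finset.mem_insert] at he hf
  rcases he with rfl | he <;> rcases hf with rfl | hf
  · rfl
  · rcases Sym2.mem_iff.1 hxe with rfl | rfl
    · exact absurd hxf (ha f hf)
    · exact absurd hxf (hb f hf)
  · rcases Sym2.mem_iff.1 hxf with rfl | rfl
    · exact absurd hxe (ha e he)
    · exact absurd hxe (hb e he)
  · exact hM e he f hf x hxe hxf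

/-- In a maximum matching no edge has both ends uncovered. -/
lemma covered_of_max {V : Type} {E M : Finset (Sym2 V)} {n : ℕ}
    (hmax : ∀ M ⊆ E, IsMatchingSet M → M.card ≤ n) (hME : M ⊆ E) (hM : IsMatchingSet M)
    (hMn : M.card = n) {a b : V} (hab : s(a, b) ∈ E) (ha : a ∉ coveredVerts M) :
    b ∈ coveredVerts M := by
  classical
  by_contra hb
  have h := hM.insert ha hb
  have := hmax _ (Finset.insert_subset hab hME) h.1
  omega

/-- The distance-two case of Gallai's lemma: if a maximum matching `M` misses two distinct
neighbours `u`, `v` of `s`, then every maximum matching `N` covers `s`. If `N` misses `s`, an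
exchange along an edge of `M` yields another maximum matching missing `s` that has more edges in
common with `M`; hence the induction on `|M| - |M ∩ N|`. -/
lemma gallai_step {V : Type} {E M : Finset (Sym2 V)} {n : ℕ}
    (hE : ∀ e ∈ E, ¬ e.IsDiag)
    (hmax : ∀ M ⊆ E, IsMatchingSet M → M.card ≤ n) (hME : M ⊆ E) (hM : IsMatchingSet M)
    (hMn : M.card = n) {s u v : V} (huv : u ≠ v) (hsu : s(s, u) ∈ E) (hsv : s(s, v) ∈ E)
    (hu : u ∉ coveredVerts M) (hv : v ∉ coveredVerts M) :
    ∀ N ⊆ E, IsMatchingSet N → N.card = n → s ∈ coveredVerts N := by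
  classical
  suffices H : ∀ d, ∀ N ⊆ E, IsMatchingSet N → N.card = n → n ≤ (N ∩ M).card + d →
      s ∈ coveredVerts N from fun N h1 h2 h3 => H n N h1 h2 h3 (by omega)
  intro d
  induction d with
  | zero =>
    intro N hNE hN hNn hd
    have h1 : N ∩ M = M := Finset.eq_of_subset_of_card_le Finset.inter_subset_right (by omega)
    have h2 : N ∩ M = N := Finset.eq_of_subset_of_card_le Finset.inter_subset_left (by omega)
    rw [← h2, h1]
    exact covered_of_max hmax hME hM hMn (Sym2.eq_swap ▸ hsu) hu
  | succ d ih =>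
    intro N hNE hN hNn hd
    by_contra hs
    have huN := covered_of_max hmax hNE hN hNn hsu hs
    have hvN := covered_of_max hmax hNE hN hNn hsv hs
    -- `M` and `N` cover equally many vertices and `u`, `v` are covered by `N` only.
    have hcard : (coveredVerts M \ coveredVerts N).card
        = (coveredVerts N \ coveredVerts M).card := by
      apply Finset.card_sdiff_comm
      rw [card_coveredVerts hM fun e he => hE e (hME he),
        card_coveredVerts hN fun e he => hE e (hNE he), hMn, hNn]
    have htwo : 1 < (coveredVerts N \ coveredVerts M).card :=
      Finset.one_lt_card.2 ⟨u, by simp [huN, hu], v, by simp [hvN, hv], huv⟩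
    obtain ⟨x, hx, hxs⟩ := Finset.exists_mem_ne (hcard ▸ htwo) s
    rw [Finset.mem_sdiff] at hx
    obtain ⟨hxM, hxN⟩ := hx
    obtain ⟨e, heM, hxe⟩ := mem_coveredVerts.1 hxM
    obtain ⟨y, rfl⟩ := Sym2.mem_iff_exists.1 hxe
    have hyN := covered_of_max hmax hNE hN hNn (hME heM) hxN
    obtain ⟨f, hfN, hyf⟩ := mem_coveredVerts.1 hyN
    have hys : y ≠ s := fun h => hs (h ▸ hyN)
    have hxN' := hxN
    have hs' := hs
    rw [mem_coveredVerts] at hxN' hs'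
    push Not at hxN' hs'
    have hne : s(x, y) ∉ N := fun h => hxN' _ h (Sym2.mem_mk_left x y)
    have hfM : f ∉ M := fun h =>
      hne (hM _ heM f h y (Sym2.mem_mk_right x y) hyf ▸ hfN)
    have hNe : IsMatchingSet (N.erase f) := fun a ha b hb =>
      hN a (Finset.mem_of_mem_erase ha) b (Finset.mem_of_mem_erase hb)
    have hx1 : x ∉ coveredVerts (N.erase f) := by
      rw [mem_coveredVerts]
      rintro ⟨g, hg, hxg⟩
      exact hxN' g (Finset.mem_of_mem_erase hg) hxg
    have hy1 : y ∉ coveredVerts (N.erase f) := by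
      rw [mem_coveredVerts]
      rintro ⟨g, hg, hyg⟩
      exact Finset.ne_of_mem_erase hg (hN g (Finset.mem_of_mem_erase hg) f hfN y hyg hyf)
    obtain ⟨hN', hcN'⟩ := hNe.insert hx1 hy1
    have hce := Finset.card_erase_add_one hfN
    have hsub : insert s(x, y) (N ∩ M) ⊆ insert s(x, y) (N.erase f) ∩ M := by
      intro g hg
      rw [Finset.mem_insert, Finset.mem_inter] at hg
      rcases hg with rfl | ⟨h1, h2⟩
      · simp [heM]
      · have : g ≠ f := fun h => hfM (h ▸ h2)
        simp [h1, h2, this]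
    have hc := Finset.card_le_card hsub
    rw [Finset.card_insert_of_notMem (by simp [hne])] at hc
    have hfin := ih (insert s(x, y) (N.erase f))
      (Finset.insert_subset (hME heM) ((Finset.erase_subset _ _).trans hNE)) hN'
      (by omega) (by omega)
    obtain ⟨g, hg, hsg⟩ := mem_coveredVerts.1 hfin
    rw [Finset.mem_insert] at hg
    rcases hg with rfl | hg
    · rcases Sym2.mem_iff.1 hsg with h | h
      · exact hxs h.symm
      · exact hys h.symm
    · exact hs' g (Finset.mem_of_mem_erase hg) hsg

open Classical in
/-- A graph with maximum degree at most `Δ` and matching number at most `n` has at most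
`n * (Δ + 1)` edges. -/
lemma card_le_of_matching_le {V : Type} (Δ n : ℕ) : ∀ E : Finset (Sym2 V),
    (∀ e ∈ E, ¬ e.IsDiag) → (∀ v : V, (E.filter fun e => v ∈ e).card ≤ Δ) →
    (∀ M ⊆ E, IsMatchingSet M → M.card ≤ n) → E.card ≤ n * (Δ + 1) := by
  induction n with
  | zero =>
    intro E hE hΔ hmax
    rw [zero_mul, Nat.le_zero, Finset.card_eq_zero, Finset.eq_empty_iff_forall_notMem]
    intro e he
    have := hmax {e} (by simpa using he) (by intro a ha b hb; simp_all)
    simp at this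
  | succ n ih =>
    intro E hE hΔ hmax
    by_cases hex : ∃ M ⊆ E, IsMatchingSet M ∧ M.card = n + 1
    swap
    · have := ih E hE hΔ fun M h1 h2 => by
        have h3 := hmax M h1 h2
        have h4 : M.card ≠ n + 1 := fun h => hex ⟨M, h1, h2, h⟩
        omega
      nlinarith
    by_cases hcov : ∃ s : V, ∀ M ⊆ E, IsMatchingSet M → M.card = n + 1 → s ∈ coveredVerts M
    · obtain ⟨s, hs⟩ := hcov
      have h1 := ih (E.filter fun e => s ∉ e) (fun e he => hE e (Finset.mem_filter.1 he).1)
        (fun v => le_trans (Finset.card_le_card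
          (Finset.filter_subset_filter _ (Finset.filter_subset _ _))) (hΔ v))
        (fun M hM1 hM2 => by
          have h3 := hmax M (hM1.trans (Finset.filter_subset _ _)) hM2
          have h4 : M.card ≠ n + 1 := fun h => by
            obtain ⟨e, he, hse⟩ :=
              mem_coveredVerts.1 (hs M (hM1.trans (Finset.filter_subset _ _)) hM2 h)
            exact (Finset.mem_filter.1 (hM1 he)).2 hse
          omega)
      have h2 := Finset.card_filter_add_card_filter_not (s := E) (fun e => s ∈ e)
      have h3 := hΔ s
      nlinarith
    · push Not at hcov
      obtain ⟨M, hME, hM, hMn⟩ := hex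
      set C := coveredVerts M with hC
      have hCcard : C.card = 2 * (n + 1) := by
        rw [hC, card_coveredVerts hM fun e he => hE e (hME he), hMn]
      have hout : ∀ s, (E.filter fun e => s ∈ e ∧ ∃ x ∈ e, x ∉ C ∧ x ≠ s).card ≤ 1 := by
        intro s
        rw [Finset.card_le_one]
        intro e he f hf
        simp only [Finset.mem_filter] at he hf
        obtain ⟨he, hse, u, hu, huC, hus⟩ := he
        obtain ⟨hf, hsf, v, hv, hvC, hvs⟩ := hf
        have e1 : e = s(s, u) := (Sym2.mem_and_mem_iff hus.symm).1 ⟨hse, hu⟩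
        have f1 : f = s(s, v) := (Sym2.mem_and_mem_iff hvs.symm).1 ⟨hsf, hv⟩
        by_contra hne
        have huv : u ≠ v := fun h => hne (by rw [e1, f1, h])
        obtain ⟨N, hN1, hN2, hN3, hN4⟩ := hcov s
        exact hN4 (gallai_step hE hmax hME hM hMn huv (e1 ▸ he) (f1 ▸ hf) huC hvC N hN1 hN2 hN3)
      -- An edge inside `C` is counted once at each end, an edge leaving `C` twice at its
      -- covered end.
      have hedge : ∀ e ∈ E, 2 ≤ ∑ s ∈ C, ((if s ∈ e then 1 else 0) +
          (if s ∈ e ∧ ∃ x ∈ e, x ∉ C ∧ x ≠ s then 1 else 0)) := by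
        intro e he
        induction e using Sym2.inductionOn with
        | hf a b =>
          have hab : a ≠ b := fun h => hE _ he (by simpa using h)
          by_cases ha : a ∈ C
          · by_cases hb : b ∈ C
            · refine le_trans ?_ (Finset.sum_le_sum_of_subset
                (Finset.insert_subset ha (Finset.singleton_subset_iff.2 hb)))
              rw [Finset.sum_pair hab]
              simp only [Sym2.mem_mk_left, Sym2.mem_mk_right, if_true]
              omega
            · refine le_trans ?_ (Finset.sum_le_sum_of_subset (Finset.singleton_subset_iff.2 ha))
              rw [Finset.sum_singleton, if_pos (Sym2.mem_mk_left a b),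
                if_pos ⟨Sym2.mem_mk_left a b, b, Sym2.mem_mk_right a b, hb, hab.symm⟩]
          · have hb : b ∈ C := covered_of_max hmax hME hM hMn he ha
            refine le_trans ?_ (Finset.sum_le_sum_of_subset (Finset.singleton_subset_iff.2 hb))
            rw [Finset.sum_singleton, if_pos (Sym2.mem_mk_right a b),
              if_pos ⟨Sym2.mem_mk_right a b, a, Sym2.mem_mk_left a b, ha, hab⟩]
      have hlow := Finset.card_nsmul_le_sum E _ 2 hedge
      rw [Finset.sum_comm] at hlow
      have hup := Finset.sum_le_card_nsmul C (fun s => ∑ e ∈ E, ((if s ∈ e then 1 else 0) +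
          (if s ∈ e ∧ ∃ x ∈ e, x ∉ C ∧ x ≠ s then 1 else 0))) (Δ + 1) (by
        intro s _
        rw [Finset.sum_add_distrib, ← Finset.card_filter, ← Finset.card_filter]
        exact add_le_add (hΔ s) (hout s))
      have := hlow.trans hup
      rw [hCcard, smul_eq_mul, smul_eq_mul] at this
      nlinarith

/-- A matching of size `k` inside a strong clique gives a `K_k` minor. -/
lemma hasCliqueMinor_of_matching {V : Type} {G : SimpleGraph V} {M : Finset (Sym2 V)}
    (hS : IsStrongCliqueSet G (M : Set (Sym2 V))) (hM : IsMatchingSet M) {k : ℕ}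
    (hk : M.card = k) : HasCliqueMinor G k := by
  let φ := M.equivFinOfCardEq hk
  have hne : ∀ i j, i ≠ j → (φ.symm i : Sym2 V) ≠ φ.symm j := fun i j hij h =>
    hij (φ.symm.injective (Subtype.ext h))
  refine ⟨fun i => {x | x ∈ (φ.symm i : Sym2 V)}, fun i => ?_, fun i j hij => ?_,
    fun i j hij => ?_⟩
  · have he := hS.1 (φ.symm i).2
    beta_reduce
    generalize (φ.symm i : Sym2 V) = e at he ⊢
    induction e using Sym2.inductionOn with
    | hf a b =>
      have : {x | x ∈ s(a, b)} = ({a, b} : Set V) := by ext; simp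
      rw [this]
      exact SimpleGraph.induce_pair_connected_of_adj he
  · rw [Set.disjoint_left]
    intro x hx hx'
    exact hne i j hij (hM _ (φ.symm i).2 _ (φ.symm j).2 x hx hx')
  · rcases hS.2 _ (φ.symm i).2 _ (φ.symm j).2 (hne i j hij) with ⟨x, hx, hx'⟩ | ⟨x, y, hx, hy, h⟩
    · exact absurd (hM _ (φ.symm i).2 _ (φ.symm j).2 x hx hx') (hne i j hij)
    · exact ⟨x, hx, y, hy, h⟩

/-- Any `K_k`-minor-free finite simple graph of maximum degree `Δ` has strong clique number
at most `(k-1)(Δ+1)`. -/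
theorem stmt_5 (k : ℕ) (hk : 2 ≤ k) {V : Type} [Fintype V] (G : SimpleGraph V)
    (hminor : ¬ HasCliqueMinor G k)
    (Δ : ℕ) (hΔ : ∀ v : V, (G.neighborSet v).ncard ≤ Δ)
    (S : Finset (Sym2 V)) (hS : IsStrongCliqueSet G (S : Set (Sym2 V))) :
    S.card ≤ (k - 1) * (Δ + 1) := by
  classical
  apply card_le_of_matching_le
  · intro e he
    exact G.not_isDiag_of_mem_edgeSet (hS.1 he)
  · intro v
    refine le_trans ?_ (hΔ v)
    rw [Set.ncard_eq_toFinset_card' (G.neighborSet v)]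
    refine le_trans (Finset.card_le_card (t := (G.neighborSet v).toFinset.image fun w => s(v, w))
      ?_) Finset.card_image_le
    intro e he
    rw [Finset.mem_filter] at he
    obtain ⟨w, rfl⟩ := Sym2.mem_iff_exists.1 he.2
    exact Finset.mem_image.2 ⟨w, by simpa using hS.1 he.1, rfl⟩
  · intro M hMS hM
    by_contra hlt
    obtain ⟨M', hM', hcard⟩ := Finset.exists_subset_card_eq (show k ≤ M.card by omega)
    refine hminor (hasCliqueMinor_of_matching (M := M') ⟨?_, ?_⟩ ?_ hcard)
    · exact fun e he => hS.1 (hMS (hM' he))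
    · exact fun e he f hf => hS.2 e (hMS (hM' he)) f (hMS (hM' hf))
    · exact fun e he f hf => hM e (hM' he) f (hM' hf)
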